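/- Let μ be a nonzero, σ-finite, nonnegative Borel measure on (0,∞) such that ∫ exp(−ε·θ²/2) μ(dθ) < ∞ for every ε > 0, and let b : (0,∞) → ℝ satisfy r_μ(t, b(t)) = 1 for every t ∈ (0,∞). Then b is concave on (0,∞). -/

import Mathlib

open MeasureTheory Set Filter
open scoped ENNReal NNReal Topology

noncomputable def rTheta (θ t x : ℝ) : ℝ := Real.exp (-θ ^ 2 / (2 * t) + θ * x / t)

noncomputable def rMu (μ : Measure ℝ) (t x : ℝ) : ℝ≥0∞ :=
  ∫⁻ θ, ENNReal.ofReal (rTheta θ t x) ∂μ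

/-!
The exponent `-θ² / (2t) + θx / t` is linear in `(1/t, x/t)`, so in these coordinates `r_μ` is a
Laplace transform and its sublevel sets are convex. The projective map `(t, x) ↦ (1/t, x/t)` sends
segments in `t > 0` to segments, hence `{(t, x) | t > 0, r_μ(t, x) ≤ 1}` is convex as well. Since
`μ` lives on `θ > 0`, the function `r_μ(t, ·)` is strictly increasing and this set is the hypograph
of `b`.
-/

section LinearFractional

variable {𝕜 E : Type*} [Field 𝕜] [LinearOrder 𝕜] [IsStrictOrderedRing 𝕜]
  [AddCommGroup E] [Module 𝕜 E]

theorem convex_setOf_inv_fst_inv_smul_snd_mem {C : Set (𝕜 × E)} (hC : Convex 𝕜 C) :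
    Convex 𝕜 {p : 𝕜 × E | 0 < p.1 ∧ (p.1⁻¹, p.1⁻¹ • p.2) ∈ C} := by
  rintro ⟨t₁, x₁⟩ ⟨ht₁ : 0 < t₁, hC₁⟩ ⟨t₂, x₂⟩ ⟨ht₂ : 0 < t₂, hC₂⟩ a b ha hb hab
  have ht : 0 < a * t₁ + b * t₂ := convex_Ioi (0 : 𝕜) ht₁ ht₂ ha hb hab
  refine ⟨ht, ?_⟩
  have hweights : a * t₁ / (a * t₁ + b * t₂) + b * t₂ / (a * t₁ + b * t₂) = 1 := by
    rw [← add_div, div_self ht.ne']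
  convert hC hC₁ hC₂ (by positivity) (by positivity) hweights using 1
  ext1
  · simp only [Prod.smul_mk, Prod.mk_add_mk, smul_eq_mul]
    field_simp
    exact hab.symm
  · simp only [Prod.smul_mk, Prod.mk_add_mk, smul_eq_mul, smul_add, smul_smul]
    congr 2 <;> field_simp

end LinearFractional

section Lintegral

variable {α E : Type*} [MeasurableSpace α] {μ : Measure α} [AddCommGroup E] [Module ℝ E]
  {s : Set E} {f : α → E → ℝ}

theorem lintegral_ofReal_convexCombination_le (hf : ∀ᵐ a ∂μ, ConvexOn ℝ s (f a)) {x y : E}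
    (hmeas : AEMeasurable (f · x) μ) (hx : x ∈ s) (hy : y ∈ s) {p q : ℝ}
    (hp : 0 ≤ p) (hq : 0 ≤ q) (hpq : p + q = 1) :
    ∫⁻ a, ENNReal.ofReal (f a (p • x + q • y)) ∂μ ≤
      ENNReal.ofReal p * ∫⁻ a, ENNReal.ofReal (f a x) ∂μ +
        ENNReal.ofReal q * ∫⁻ a, ENNReal.ofReal (f a y) ∂μ := by
  rw [← lintegral_const_mul' _ _ ENNReal.ofReal_ne_top,
    ← lintegral_const_mul' _ _ ENNReal.ofReal_ne_top,
    ← lintegral_add_left' (hmeas.ennreal_ofReal.const_mul _)]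
  refine lintegral_mono_ae ?_
  filter_upwards [hf] with a hfa
  calc ENNReal.ofReal (f a (p • x + q • y))
      ≤ ENNReal.ofReal (p * f a x + q * f a y) :=
        ENNReal.ofReal_le_ofReal (hfa.2 hx hy hp hq hpq)
    _ ≤ ENNReal.ofReal (p * f a x) + ENNReal.ofReal (q * f a y) := ENNReal.ofReal_add_le
    _ = _ := by rw [ENNReal.ofReal_mul hp, ENNReal.ofReal_mul hq]

theorem convex_setOf_lintegral_ofReal_le (hs : Convex ℝ s) (hf : ∀ᵐ a ∂μ, ConvexOn ℝ s (f a))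
    (hmeas : ∀ x ∈ s, AEMeasurable (f · x) μ) (c : ℝ≥0∞) :
    Convex ℝ {x ∈ s | ∫⁻ a, ENNReal.ofReal (f a x) ∂μ ≤ c} := by
  rintro x ⟨hxs, hxc⟩ y ⟨hys, hyc⟩ p q hp hq hpq
  refine ⟨hs hxs hys hp hq hpq, ?_⟩
  calc ∫⁻ a, ENNReal.ofReal (f a (p • x + q • y)) ∂μ
      ≤ ENNReal.ofReal p * ∫⁻ a, ENNReal.ofReal (f a x) ∂μ +
          ENNReal.ofReal q * ∫⁻ a, ENNReal.ofReal (f a y) ∂μ :=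
        lintegral_ofReal_convexCombination_le hf (hmeas x hxs) hxs hys hp hq hpq
    _ ≤ ENNReal.ofReal p * c + ENNReal.ofReal q * c := by gcongr
    _ = c := by rw [← add_mul, ← ENNReal.ofReal_add hp hq, hpq, ENNReal.ofReal_one, one_mul]

theorem convex_setOf_lintegral_exp_le {ℓ : α → E →ₗ[ℝ] ℝ} (hℓ : ∀ x, AEMeasurable (ℓ · x) μ)
    (c : ℝ≥0∞) : Convex ℝ {x | ∫⁻ a, ENNReal.ofReal (Real.exp (ℓ a x)) ∂μ ≤ c} := by
  simpa only [mem_univ, true_and] using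
    convex_setOf_lintegral_ofReal_le (μ := μ) (f := fun a x ↦ Real.exp (ℓ a x)) convex_univ
      (.of_forall fun a ↦ convexOn_exp.comp_linearMap (ℓ a)) (fun x _ ↦ (hℓ x).exp) c

end Lintegral

theorem rTheta_eq_exp_inv_mul (θ t x : ℝ) :
    rTheta θ t x = Real.exp (-θ ^ 2 / 2 * t⁻¹ + θ * (t⁻¹ * x)) := by
  rw [rTheta]
  congr 1
  ring

theorem measurable_rTheta (t x : ℝ) : Measurable (rTheta · t x) := by
  unfold rTheta
  fun_prop

theorem rTheta_strictMono {θ t : ℝ} (hθ : 0 < θ) (ht : 0 < t) : StrictMono (rTheta θ t) := by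
  intro x y hxy
  unfold rTheta
  gcongr

theorem convex_setOf_rMu_le (μ : Measure ℝ) (c : ℝ≥0∞) :
    Convex ℝ {p : ℝ × ℝ | 0 < p.1 ∧ rMu μ p.1 p.2 ≤ c} := by
  let exponent (θ : ℝ) : ℝ × ℝ →ₗ[ℝ] ℝ :=
    (-θ ^ 2 / 2) • LinearMap.fst ℝ ℝ ℝ + θ • LinearMap.snd ℝ ℝ ℝ
  have hexponent (v : ℝ × ℝ) : AEMeasurable (exponent · v) μ := by
    change AEMeasurable (fun θ ↦ -θ ^ 2 / 2 * v.1 + θ * v.2) μ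
    fun_prop
  simp only [rMu, rTheta_eq_exp_inv_mul]
  exact convex_setOf_inv_fst_inv_smul_snd_mem (convex_setOf_lintegral_exp_le hexponent c)

section PositiveSupport

variable {μ : Measure ℝ} {t : ℝ}

theorem rMu_mono (hpos : ∀ᵐ θ ∂μ, 0 < θ) (ht : 0 < t) : Monotone (rMu μ t) := by
  intro x y hxy
  refine lintegral_mono_ae ?_
  filter_upwards [hpos] with θ hθ
  exact ENNReal.ofReal_le_ofReal ((rTheta_strictMono hθ ht).monotone hxy)

theorem rMu_lt_rMu (hμ : μ ≠ 0) (hpos : ∀ᵐ θ ∂μ, 0 < θ) (ht : 0 < t) {x y : ℝ}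
    (hfin : rMu μ t x ≠ ∞) (hxy : x < y) : rMu μ t x < rMu μ t y := by
  refine lintegral_strict_mono hμ (measurable_rTheta t y).ennreal_ofReal.aemeasurable hfin ?_
  filter_upwards [hpos] with θ hθ
  exact (ENNReal.ofReal_lt_ofReal_iff (Real.exp_pos _)).2 (rTheta_strictMono hθ ht hxy)

theorem rMu_le_rMu_iff (hμ : μ ≠ 0) (hpos : ∀ᵐ θ ∂μ, 0 < θ) (ht : 0 < t) {x y : ℝ}
    (hfin : rMu μ t y ≠ ∞) : rMu μ t x ≤ rMu μ t y ↔ x ≤ y :=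
  ⟨fun hle ↦ not_lt.1 fun hyx ↦ (rMu_lt_rMu hμ hpos ht hfin hyx).not_ge hle,
    fun hxy ↦ rMu_mono hpos ht hxy⟩

end PositiveSupport

theorem stmt_1 (μ : Measure ℝ) [SigmaFinite μ] (hμne : μ ≠ 0)
    (hsupp : μ (Set.Ioi (0 : ℝ))ᶜ = 0)
    (hint : ∀ ε : ℝ, 0 < ε →
      (∫⁻ θ, ENNReal.ofReal (Real.exp (-(ε * θ ^ 2) / 2)) ∂μ) < ⊤)
    (b : ℝ → ℝ)
    (hb : ∀ t ∈ Set.Ioi (0 : ℝ), rMu μ t (b t) = 1) :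
    ConcaveOn ℝ (Set.Ioi 0) b := by
  have hpos : ∀ᵐ θ ∂μ, 0 < θ := mem_ae_iff.2 hsupp
  have hypograph_eq : {p : ℝ × ℝ | p.1 ∈ Ioi 0 ∧ p.2 ≤ b p.1} =
      {p | 0 < p.1 ∧ rMu μ p.1 p.2 ≤ 1} := by
    ext ⟨t, x⟩
    refine and_congr_right fun ht ↦ ?_
    have hfin : rMu μ t (b t) ≠ ∞ := hb t ht ▸ ENNReal.one_ne_top
    rw [← hb t ht, rMu_le_rMu_iff hμne hpos ht hfin]
  rw [concaveOn_iff_convex_hypograph, hypograph_eq]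
  exact convex_setOf_rMu_le μ 1
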